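/- Let d ≥ 1, let G : ℝ^d → ℝ be Lipschitz continuous with Lipschitz constant K_G ≥ 0 (with respect to the Euclidean norm), fix t > 0, x, y ∈ ℝ^d and δ > 0. Let X : [0,t] → ℝ^d be a continuous path such that for every r ∈ [0,t] and every coordinate k ∈ {1,…,d}, |X(r)_k − ((1 − r/t)·x_k + (r/t)·y_k)| ≤ δ. Then |∫_0^t G(X(r)) dr − t·∫_0^1 G((1−r)·x + r·y) dr| ≤ √d · δ · K_G · t. -/

import Mathlib

open MeasureTheory

open scoped NNReal ENNReal

theorem dist_piLp_le_of_forall_dist_le {ι : Type*} [Fintype ι] {p : ℝ≥0∞} [Fact (1 ≤ p)]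
    {α : ι → Type*} [∀ i, PseudoMetricSpace (α i)] {u v : PiLp p α} {δ : ℝ} (hδ : 0 ≤ δ)
    (huv : ∀ i, dist (u i) (v i) ≤ δ) :
    dist u v ≤ (Fintype.card ι : ℝ) ^ (1 / p).toReal * δ := by
  have hsup : dist (WithLp.ofLp u) (WithLp.ofLp v) ≤ δ := (dist_pi_le_iff hδ).2 huv
  calc dist u v
      ≤ (Fintype.card ι : ℝ) ^ (1 / p).toReal * dist (WithLp.ofLp u) (WithLp.ofLp v) := by
        simpa only [NNReal.coe_rpow, NNReal.coe_natCast] using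
          (PiLp.antilipschitzWith_ofLp p α).le_mul_dist u v
    _ ≤ (Fintype.card ι : ℝ) ^ (1 / p).toReal * δ := by gcongr

theorem dist_euclideanSpace_le_of_forall_dist_le {𝕜 ι : Type*} [RCLike 𝕜] [Fintype ι]
    {u v : EuclideanSpace 𝕜 ι} {δ : ℝ} (hδ : 0 ≤ δ) (huv : ∀ i, dist (u i) (v i) ≤ δ) :
    dist u v ≤ √(Fintype.card ι) * δ := by
  simpa [Real.sqrt_eq_rpow] using dist_piLp_le_of_forall_dist_le hδ huv

theorem intervalIntegrable_comp_div {F : Type*} [NormedAddCommGroup F] {f : ℝ → F} {a b : ℝ}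
    (hf : IntervalIntegrable f volume a b) (c : ℝ) :
    IntervalIntegrable (fun r ↦ f (r / c)) volume (a * c) (b * c) := by
  simpa only [div_eq_inv_mul, inv_inv, mul_comm c] using hf.comp_mul_left (c := c⁻¹)

section LipschitzIntegral

variable {E F : Type*} [PseudoMetricSpace E] [NormedAddCommGroup F] [NormedSpace ℝ F]
  {G : E → F} {K : ℝ≥0} {X : ℝ → E} {ε : ℝ}

theorem dist_integral_comp_le_of_lipschitzWith {Y : ℝ → E} {a b : ℝ} (hG : LipschitzWith K G)
    (hX : IntervalIntegrable (fun r ↦ G (X r)) volume a b)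
    (hY : IntervalIntegrable (fun r ↦ G (Y r)) volume a b)
    (hXY : ∀ r ∈ Set.uIoc a b, dist (X r) (Y r) ≤ ε) :
    dist (∫ r in a..b, G (X r)) (∫ r in a..b, G (Y r)) ≤ K * ε * |b - a| := by
  rw [dist_eq_norm, ← intervalIntegral.integral_sub hX hY]
  refine intervalIntegral.norm_integral_le_of_norm_le_const fun r hr ↦ ?_
  rw [← dist_eq_norm]
  exact hG.dist_le_mul_of_le (hXY r hr)

theorem stmt_0_general (hG : LipschitzWith K G) {t : ℝ} (ht : 0 < t) {γ : ℝ → E}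
    (hX : IntervalIntegrable (fun r ↦ G (X r)) volume 0 t)
    (hγ : IntervalIntegrable (fun r ↦ G (γ r)) volume 0 1)
    (hXγ : ∀ r ∈ Set.Icc 0 t, dist (X r) (γ (r / t)) ≤ ε) :
    dist (∫ r in (0 : ℝ)..t, G (X r)) (t • ∫ r in (0 : ℝ)..1, G (γ r)) ≤ K * ε * t := by
  have hrescale : ∫ r in (0 : ℝ)..t, G (γ (r / t)) = t • ∫ r in (0 : ℝ)..1, G (γ r) := by
    rw [intervalIntegral.integral_comp_div (fun r ↦ G (γ r)) ht.ne', zero_div, div_self ht.ne']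
  have hclose : ∀ r ∈ Set.uIoc 0 t, dist (X r) (γ (r / t)) ≤ ε := fun r hr ↦
    hXγ r (Set.Ioc_subset_Icc_self (Set.uIoc_of_le ht.le ▸ hr))
  have hγt : IntervalIntegrable (fun r ↦ G (γ (r / t))) volume 0 t := by
    simpa only [zero_mul, one_mul] using intervalIntegrable_comp_div hγ t
  simpa only [hrescale, sub_zero, abs_of_pos ht] using
    dist_integral_comp_le_of_lipschitzWith hG hX hγt hclose

end LipschitzIntegral

/-- Lemma 2 of the paper: if a continuous path `X` stays, coordinatewise, within `δ` of the
line segment interpolating `x` and `y` on `[0,t]`, then the time average of a Lipschitz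
function `G` along the path is within `√d·δ·K_G·t` of its average along the segment. -/
theorem stmt_0 {d : ℕ} (hd : 1 ≤ d)
    (G : EuclideanSpace ℝ (Fin d) → ℝ) (K : ℝ) (hK : 0 ≤ K)
    (hG : ∀ a b : EuclideanSpace ℝ (Fin d), |G a - G b| ≤ K * ‖a - b‖)
    (t : ℝ) (ht : 0 < t) (x y : EuclideanSpace ℝ (Fin d)) (δ : ℝ) (hδ : 0 < δ)
    (X : ℝ → EuclideanSpace ℝ (Fin d)) (hXc : ContinuousOn X (Set.Icc 0 t))
    (hX : ∀ r ∈ Set.Icc (0 : ℝ) t, ∀ k : Fin d,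
      |X r k - ((1 - r / t) * x k + (r / t) * y k)| ≤ δ) :
    |(∫ r in (0 : ℝ)..t, G (X r)) - t * ∫ r in (0 : ℝ)..1, G ((1 - r) • x + r • y)| ≤
      Real.sqrt d * δ * K * t := by
  lift K to ℝ≥0 using hK
  have hLip : LipschitzWith K G := .of_dist_le_mul fun a b ↦ by
    simpa only [Real.dist_eq, dist_eq_norm a b] using hG a b
  have hpath : IntervalIntegrable (fun r ↦ G (X r)) volume 0 t :=
    (hLip.continuous.comp_continuousOn hXc).intervalIntegrable_of_Icc ht.le
  have hsegment : Continuous fun r : ℝ ↦ G ((1 - r) • x + r • y) :=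
    hLip.continuous.comp (by fun_prop)
  have htube : ∀ r ∈ Set.Icc 0 t, dist (X r) ((1 - r / t) • x + (r / t) • y) ≤ √d * δ := by
    intro r hr
    have hcoord : ∀ k, dist (X r k) (((1 - r / t) • x + (r / t) • y) k) ≤ δ := hX r hr
    simpa only [Fintype.card_fin] using dist_euclideanSpace_le_of_forall_dist_le hδ.le hcoord
  simpa only [Real.dist_eq, smul_eq_mul, mul_comm (K : ℝ)] using
    stmt_0_general hLip ht hpath (hsegment.intervalIntegrable 0 1) htube
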